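/- Let X ⊂ ℝⁿ be an 𝒮^m-measurable set with 𝒮^m(X) < ∞ (where 𝒮^m denotes m-dimensional Hausdorff spherical measure), and let f : X → ℝ be 𝒮^m-measurable, non-negative, and bounded. Let E be a fixed M-dimensional affine subspace of ℝⁿ with 0 ≤ M ≤ n−1, and for t ≥ 0 let X_t denote the set of points of X at distance exactly t from E. Then ∫₀^∞ ∫_{X_t} f dℋ^{m−1}_spherical dt ≤ ∫_X f d𝒮^m. -/

import Mathlib

open MeasureTheory Metric Set
open scoped Classical ENNReal

/-- The pre-measure for spherical Hausdorff measure: a covering set is charged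
`(diam s)^d` if it is a closed ball, and `∞` otherwise (forcing covers by balls). -/
noncomputable def sphericalPre (n d : ℕ) : Set (EuclideanSpace ℝ (Fin n)) → ℝ≥0∞ :=
  fun s =>
    if ∃ (x : EuclideanSpace ℝ (Fin n)) (r : ℝ), s = Metric.closedBall x r then
      EMetric.diam s ^ d
    else ⊤

/-- The normalized `d`-dimensional Hausdorff spherical measure `𝒮^d` on `ℝⁿ`:
the Carathéodory–metric measure generated by covers by closed balls charged
`(diam)^d`, normalized by `α_d / 2^d` where `α_d` is the volume of the unit
`d`-ball. -/
noncomputable def sphericalMeasure (n d : ℕ) : Measure (EuclideanSpace ℝ (Fin n)) :=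
  (MeasureTheory.volume (Metric.ball (0 : EuclideanSpace ℝ (Fin d)) 1) / 2 ^ d) •
    Measure.mkMetric' (sphericalPre n d)

/-!
Since `𝒮^m` charges a ball of radius `r` the volume of the `m`-dimensional ball of radius `r`,
Cavalieri's principle writes this charge as the integral over `t` of the volumes of the
`(m - 1)`-dimensional balls of radius `√(r ^ 2 - (t - t₀) ^ 2)`, where `t₀` is the distance of the
centre to `E`. The slice of the ball at distance `t` from `E` is curved, but since the nearest-point
projection to the convex set `E` does not increase distances, this slice still lies in a ball whose
radius is `√(r ^ 2 - (t - t₀) ^ 2)` up to a factor tending to `1` with `r`, for fixed `t > 0`. Hence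
the inequality holds, up to this factor, for each ball of a fine covering; summing over the covering
and refining it, Fatou's lemma gives the inequality for sets, and so for functions.
-/

/-- The upper integral of `g` is at most `c`: the function `g`, which need not be measurable, has a
measurable majorant of integral at most `c`. For a nonmeasurable `g` the integral `∫⁻` is a lower
integral, which is not subadditive, so bounds on `∫⁻` cannot be summed over a covering. -/
def UpperLIntegralLE {α : Type*} [MeasurableSpace α] (μ : Measure α) (g : α → ℝ≥0∞)
    (c : ℝ≥0∞) : Prop :=
  ∃ φ : α → ℝ≥0∞, Measurable φ ∧ g ≤ᵐ[μ] φ ∧ ∫⁻ a, φ a ∂μ ≤ c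

namespace UpperLIntegralLE

open Filter Topology

variable {α β ι : Type*} [MeasurableSpace α] [MeasurableSpace β] {μ : Measure α} {τ : Measure β}
  {g g' : α → ℝ≥0∞} {c c' : ℝ≥0∞}

lemma top : UpperLIntegralLE μ g ⊤ :=
  ⟨fun _ => ⊤, measurable_const, ae_of_all _ fun _ => le_top, le_top⟩

lemma lintegral_le (h : UpperLIntegralLE μ g c) : ∫⁻ a, g a ∂μ ≤ c :=
  let ⟨_, _, hg, hφ⟩ := h
  (lintegral_mono_ae hg).trans hφ

lemma ae_eq_zero (h : UpperLIntegralLE μ g 0) : g =ᵐ[μ] 0 := by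
  obtain ⟨φ, hφm, hg, hφ⟩ := h
  filter_upwards [hg, (lintegral_eq_zero_iff hφm).1 (nonpos_iff_eq_zero.1 hφ)] with a ha hφa
  exact nonpos_iff_eq_zero.1 (ha.trans_eq hφa)

lemma mono (h : UpperLIntegralLE μ g c) (hg : g' ≤ᵐ[μ] g) (hc : c ≤ c') :
    UpperLIntegralLE μ g' c' :=
  let ⟨φ, hφm, hgφ, hφ⟩ := h
  ⟨φ, hφm, hg.trans hgφ, hφ.trans hc⟩

lemma add (h : UpperLIntegralLE μ g c) (h' : UpperLIntegralLE μ g' c') :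
    UpperLIntegralLE μ (g + g') (c + c') := by
  obtain ⟨φ, hφm, hg, hφ⟩ := h
  obtain ⟨ψ, hψm, hg', hψ⟩ := h'
  refine ⟨φ + ψ, hφm.add hψm, hg.add_le_add hg', ?_⟩
  simpa only [Pi.add_apply, lintegral_add_left hφm] using add_le_add hφ hψ

lemma const_mul (a : ℝ≥0∞) (h : UpperLIntegralLE μ g c) :
    UpperLIntegralLE μ (fun x => a * g x) (a * c) := by
  obtain ⟨φ, hφm, hg, hφ⟩ := h
  refine ⟨fun x => a * φ x, hφm.const_mul a, hg.mono fun x hx => mul_le_mul' le_rfl hx, ?_⟩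
  rw [lintegral_const_mul a hφm]
  gcongr

lemma tsum [Countable ι] {g : ι → α → ℝ≥0∞} {c : ι → ℝ≥0∞}
    (h : ∀ i, UpperLIntegralLE μ (g i) (c i)) :
    UpperLIntegralLE μ (fun a => ∑' i, g i a) (∑' i, c i) := by
  choose φ hφm hg hφ using h
  refine ⟨fun a => ∑' i, φ i a, .tsum hφm, ?_, ?_⟩
  · filter_upwards [ae_all_iff.2 hg] with a ha using ENNReal.tsum_le_tsum ha
  · rw [lintegral_tsum fun i => (hφm i).aemeasurable]
    exact ENNReal.tsum_le_tsum hφ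

lemma indicator {s : Set α} (hs : MeasurableSet s) (h : UpperLIntegralLE (μ.restrict s) g c) :
    UpperLIntegralLE μ (s.indicator g) c := by
  obtain ⟨φ, hφm, hg, hφ⟩ := h
  refine ⟨s.indicator φ, hφm.indicator hs, ?_, by rwa [lintegral_indicator hs]⟩
  filter_upwards [(ae_restrict_iff' hs).1 hg] with a ha
  exact indicator_le_indicator' ha

lemma of_tendsto {g : ℕ → α → ℝ≥0∞} {c : ℕ → ℝ≥0∞} {G : α → ℝ≥0∞} {C : ℝ≥0∞}
    (h : ∀ j, UpperLIntegralLE μ (g j) (c j))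
    (hg : ∀ᵐ a ∂μ, Tendsto (fun j => g j a) atTop (𝓝 (G a))) (hc : Tendsto c atTop (𝓝 C)) :
    UpperLIntegralLE μ G C := by
  choose φ hφm hgφ hφ using h
  refine ⟨fun a => liminf (fun j => φ j a) atTop, .liminf hφm, ?_, ?_⟩
  · filter_upwards [hg, ae_all_iff.2 hgφ] with a ha hle
    rw [← ha.liminf_eq]
    exact liminf_le_liminf (.of_forall hle)
  · calc ∫⁻ a, liminf (fun j => φ j a) atTop ∂μ
        ≤ liminf (fun j => ∫⁻ a, φ j a ∂μ) atTop := lintegral_liminf_le hφm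
      _ ≤ liminf c atTop := liminf_le_liminf (.of_forall hφ)
      _ = C := hc.liminf_eq

lemma iInf {ι : Sort*} {c : ι → ℝ≥0∞} (h : ∀ i, UpperLIntegralLE μ g (c i)) :
    UpperLIntegralLE μ g (⨅ i, c i) := by
  cases isEmpty_or_nonempty ι
  · rw [iInf_of_empty]
    exact top
  · obtain ⟨u, -, hu, hmem⟩ := exists_seq_tendsto_sInf (range_nonempty c) (OrderBot.bddBelow _)
    refine of_tendsto (fun j => ?_) (ae_of_all _ fun _ => tendsto_const_nhds) hu
    obtain ⟨i, hi⟩ := hmem j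
    exact hi ▸ h i

lemma lintegral_of_measurable {ν : α → Measure β}
    (h : ∀ s, MeasurableSet s → UpperLIntegralLE μ (fun a => ν a s) (τ s))
    {f : β → ℝ≥0∞} (hf : Measurable f) :
    UpperLIntegralLE μ (fun a => ∫⁻ b, f b ∂ν a) (∫⁻ b, f b ∂τ) := by
  refine Measurable.ennreal_induction (motive := fun f : β → ℝ≥0∞ =>
    UpperLIntegralLE μ (fun a => ∫⁻ b, f b ∂ν a) (∫⁻ b, f b ∂τ)) ?indicator ?add ?iSup hf
  case indicator =>
    intro c s hs
    simpa only [lintegral_indicator_const hs] using (h s hs).const_mul c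
  case add =>
    intro f f' _ hf _ ihf ihf'
    simp only [Pi.add_apply, lintegral_add_left hf]
    exact ihf.add ihf'
  case iSup =>
    intro f hf hmono ih
    have tendsto_lintegral (ν : Measure β) :
        Tendsto (fun j => ∫⁻ b, f j b ∂ν) atTop (𝓝 (∫⁻ b, ⨆ j, f j b ∂ν)) := by
      rw [lintegral_iSup hf hmono]
      exact tendsto_atTop_iSup fun i j hij => lintegral_mono (hmono hij)
    exact of_tendsto ih (ae_of_all _ fun a => tendsto_lintegral (ν a)) (tendsto_lintegral τ)

lemma lintegral {ν : α → Measure β}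
    (h : ∀ s, MeasurableSet s → UpperLIntegralLE μ (fun a => ν a s) (τ s))
    {f : β → ℝ≥0∞} (hf : AEMeasurable f τ) :
    UpperLIntegralLE μ (fun a => ∫⁻ b, f b ∂ν a) (∫⁻ b, f b ∂τ) := by
  have hnull : τ (toMeasurable τ {b | f b ≠ hf.mk f b}) = 0 := by
    rw [measure_toMeasurable]
    exact hf.ae_eq_mk
  have hae : (fun a => ∫⁻ b, f b ∂ν a) =ᵐ[μ] fun a => ∫⁻ b, hf.mk f b ∂ν a := by
    filter_upwards [(hnull ▸ h _ (measurableSet_toMeasurable _ _)).ae_eq_zero] with a ha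
    exact lintegral_congr_ae (measure_mono_null (subset_toMeasurable τ _) ha)
  exact (lintegral_of_measurable h hf.measurable_mk).mono hae.le
    (lintegral_congr_ae hf.ae_eq_mk).ge

end UpperLIntegralLE

section BallSlices

open Module

/-- The volume of the slice at height `s` of the ball of radius `r` centred at the origin of
`ℝ × F`. -/
noncomputable def ballSliceVolume (F : Type*) [NormedAddCommGroup F] [MeasureSpace F]
    (r s : ℝ) : ℝ≥0∞ :=
  volume {w : F | s ^ 2 + ‖w‖ ^ 2 ≤ r ^ 2}

lemma ballSliceVolume_of_abs_le {F : Type*} [NormedAddCommGroup F] [MeasureSpace F] {r s : ℝ}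
    (hs : |s| ≤ r) :
    ballSliceVolume F r s = volume (closedBall (0 : F) √(r ^ 2 - s ^ 2)) := by
  have hsq : s ^ 2 ≤ r ^ 2 := sq_le_sq' (abs_le.1 hs).1 (abs_le.1 hs).2
  rw [ballSliceVolume]
  congr 1
  ext w
  rw [mem_closedBall_zero_iff, Real.le_sqrt (norm_nonneg w) (sub_nonneg.2 hsq), le_sub_iff_add_le',
    mem_ofPred_eq]

variable (F : Type*) [NormedAddCommGroup F] [InnerProductSpace ℝ F] [FiniteDimensional ℝ F]
  [MeasurableSpace F] [BorelSpace F]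

lemma measurable_ballSliceVolume (r : ℝ) : Measurable (ballSliceVolume F r) :=
  measurable_measure_prodMk_left (ν := (volume : Measure F))
    (measurableSet_le (f := fun p : ℝ × F => p.1 ^ 2 + ‖p.2‖ ^ 2) (by fun_prop) measurable_const)

lemma lintegral_ballSliceVolume (G : Type*) [NormedAddCommGroup G] [InnerProductSpace ℝ G]
    [FiniteDimensional ℝ G] [MeasurableSpace G] [BorelSpace G]
    (hFG : finrank ℝ G = finrank ℝ F + 1) {r : ℝ} (hr : 0 ≤ r) :
    ∫⁻ s, ballSliceVolume F r s = volume (closedBall (0 : G) r) := by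
  have hfin : finrank ℝ (WithLp 2 (ℝ × F)) = finrank ℝ G := by
    rw [(WithLp.linearEquiv 2 ℝ (ℝ × F)).finrank_eq, finrank_prod, finrank_self, hFG, add_comm]
  have : Nontrivial G := nontrivial_of_finrank_pos (R := ℝ) (by omega)
  have hpre : WithLp.toLp 2 ⁻¹' closedBall (0 : WithLp 2 (ℝ × F)) r
      = {p : ℝ × F | p.1 ^ 2 + ‖p.2‖ ^ 2 ≤ r ^ 2} := by
    ext p
    rw [mem_preimage, mem_closedBall_zero_iff, ← sq_le_sq₀ (norm_nonneg _) hr,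
      WithLp.prod_norm_sq_eq_of_L2]
    simp
  have hpres := WithLp.volume_preserving_toLp ℝ F
  have hmeas : MeasurableSet {p : ℝ × F | p.1 ^ 2 + ‖p.2‖ ^ 2 ≤ r ^ 2} :=
    hpre ▸ hpres.measurable measurableSet_closedBall
  calc ∫⁻ s, ballSliceVolume F r s
      = volume {p : ℝ × F | p.1 ^ 2 + ‖p.2‖ ^ 2 ≤ r ^ 2} := (Measure.prod_apply hmeas).symm
    _ = volume (closedBall (0 : WithLp 2 (ℝ × F)) r) := by
      rw [← hpre, hpres.measure_preimage measurableSet_closedBall.nullMeasurableSet]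
    _ = volume (closedBall (0 : G) r) := by
      rw [InnerProductSpace.volume_closedBall, InnerProductSpace.volume_closedBall, hfin]

end BallSlices

section Geometry

open RealInnerProductSpace

variable {F : Type*}

lemma abs_infDist_sub_infDist_le_dist [PseudoMetricSpace F] (E : Set F) (x y : F) :
    |infDist x E - infDist y E| ≤ dist x y := by
  simpa [Real.dist_eq] using (lipschitz_infDist_pt E).dist_le_mul x y

/-- The radius changes only in the zero space, where every nonempty ball has diameter `0`. -/
lemma exists_closedBall_eq_ediam_eq [NormedAddCommGroup F] [NormedSpace ℝ F] (x : F) {r : ℝ}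
    (hr : 0 ≤ r) :
    ∃ r' : ℝ, 0 ≤ r' ∧ closedBall x r = closedBall x r' ∧
      ediam (closedBall x r) = ENNReal.ofReal (2 * r') := by
  cases subsingleton_or_nontrivial F
  · refine ⟨0, le_rfl, ?_, by simp [ediam_subsingleton, subsingleton_of_subsingleton]⟩
    ext y
    simp [Subsingleton.elim y x, hr]
  · refine ⟨r, hr, rfl, ?_⟩
    rw [← diam_closedBall_eq x hr, diam, ENNReal.ofReal_toReal isBounded_closedBall.ediam_ne_top]

variable [NormedAddCommGroup F] [InnerProductSpace ℝ F]

lemma exists_mem_closure_norm_sub_eq_infDist [CompleteSpace F] {E : Set F} (hE : Convex ℝ E)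
    (hne : E.Nonempty) (x : F) :
    ∃ p ∈ closure E, ‖x - p‖ = infDist x E ∧ ∀ q ∈ closure E, ⟪x - p, q - p⟫ ≤ 0 := by
  obtain ⟨p, hp, hmin⟩ := exists_norm_eq_iInf_of_complete_convex hne.closure
    isClosed_closure.isComplete hE.closure x
  refine ⟨p, hp, ?_, (norm_eq_iInf_iff_real_inner_le_zero hE.closure hp).1 hmin⟩
  simpa only [← infDist_closure (s := E), infDist_eq_iInf, dist_eq_norm] using hmin

lemma norm_add_sub_smul_sq_le {w u v : F} {l K : ℝ} (hwu : ⟪w, u⟫ ≤ 0) (hwv : 0 ≤ ⟪w, v⟫)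
    (hl : 0 ≤ l) (hv : ‖v‖ = l * ‖u‖) (hlK : l ≤ K) (hK : 1 ≤ K) :
    ‖w + (v - l • u)‖ ^ 2 ≤ K * (‖w + (v - u)‖ ^ 2 - (‖v‖ - ‖u‖) ^ 2) := by
  have hleft : ‖w + (v - l • u)‖ ^ 2
      = (‖w‖ ^ 2 + 2 * ⟪w, v⟫) + l * (2 * (‖v‖ * ‖u‖ - ⟪v, u⟫) - 2 * ⟪w, u⟫) := by
    rw [norm_add_sq_real, norm_sub_sq_real, inner_sub_right, inner_smul_right, inner_smul_right,
      norm_smul, Real.norm_of_nonneg hl, hv]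
    ring
  have hright : ‖w + (v - u)‖ ^ 2 - (‖v‖ - ‖u‖) ^ 2
      = (‖w‖ ^ 2 + 2 * ⟪w, v⟫) + (2 * (‖v‖ * ‖u‖ - ⟪v, u⟫) - 2 * ⟪w, u⟫) := by
    rw [norm_add_sq_real, norm_sub_sq_real, inner_sub_right]
    ring
  have hcauchy : 0 ≤ 2 * (‖v‖ * ‖u‖ - ⟪v, u⟫) - 2 * ⟪w, u⟫ := by
    linarith [real_inner_le_norm v u]
  rw [hleft, hright, mul_add]
  gcongr
  exact le_mul_of_one_le_left (by positivity) hK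

/-- The centre is obtained by moving `x` to height `t` along the ray from its projection to `E`. -/
lemma exists_dist_sq_le_of_infDist_eq [CompleteSpace F] {E : Set F} (hE : Convex ℝ E)
    (hne : E.Nonempty) {x : F} {t K : ℝ} (hx : 0 < infDist x E) (hK : 1 ≤ K)
    (htK : t ≤ K * infDist x E) :
    ∃ c : F, ∀ y : F, infDist y E = t →
      dist y c ^ 2 ≤ K * (dist y x ^ 2 - (t - infDist x E) ^ 2) := by
  obtain ⟨p, hp, hxp, hpmin⟩ := exists_mem_closure_norm_sub_eq_infDist hE hne x
  refine ⟨p + (t / infDist x E) • (x - p), fun y hy => ?_⟩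
  obtain ⟨q, hq, hyq, hqmin⟩ := exists_mem_closure_norm_sub_eq_infDist hE hne y
  have hwu : ⟪q - p, x - p⟫ ≤ 0 := real_inner_comm (x - p) (q - p) ▸ hpmin q hq
  have hwv : 0 ≤ ⟪q - p, y - q⟫ := by
    rw [real_inner_comm, ← neg_sub p q, inner_neg_right]
    exact neg_nonneg.2 (hqmin p hp)
  have ht : 0 ≤ t := hy ▸ infDist_nonneg
  have hle := norm_add_sub_smul_sq_le hwu hwv (div_nonneg ht hx.le)
    (by rw [hxp, hyq, hy, div_mul_cancel₀ t hx.ne']) ((div_le_iff₀ hx).2 htK) hK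
  have hyc : y - (p + (t / infDist x E) • (x - p))
      = q - p + (y - q - (t / infDist x E) • (x - p)) := by abel
  have hyx : y - x = q - p + (y - q - (x - p)) := by abel
  rw [hxp, hyq, hy] at hle
  rwa [dist_eq_norm, dist_eq_norm, hyc, hyx]

lemma exists_slice_closedBall_subset_closedBall [CompleteSpace F] {E : Set F} (hE : Convex ℝ E)
    (hne : E.Nonempty) {x : F} (r : ℝ) {t K : ℝ} (hx : 0 < infDist x E) (hK : 1 ≤ K)
    (ht : t ≤ K * infDist x E) :
    ∃ c, {y ∈ closedBall x r | infDist y E = t}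
      ⊆ closedBall c √(K * (r ^ 2 - (t - infDist x E) ^ 2)) := by
  obtain ⟨c, hc⟩ := exists_dist_sq_le_of_infDist_eq hE hne hx hK ht
  refine ⟨c, fun y ⟨hyx, hyt⟩ => Real.le_sqrt_of_sq_le ((hc y hyt).trans ?_)⟩
  have := mem_closedBall.1 hyx
  gcongr

end Geometry

section SphericalMeasure

open OuterMeasure

variable {n d : ℕ}

/-- The normalizing factor `α_d / 2 ^ d` of `𝒮^d`, for which a ball of radius `r` is charged the
volume of the `d`-dimensional ball of radius `r`. -/
noncomputable def sphericalConst (d : ℕ) : ℝ≥0∞ :=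
  volume (ball (0 : EuclideanSpace ℝ (Fin d)) 1) / 2 ^ d

lemma sphericalConst_ne_zero : sphericalConst d ≠ 0 :=
  (ENNReal.div_pos (measure_ball_pos _ _ one_pos).ne' (by finiteness)).ne'

lemma sphericalConst_ne_top : sphericalConst d ≠ ⊤ :=
  ENNReal.div_ne_top measure_ball_lt_top.ne (by positivity)

lemma sphericalConst_mul_pow {r : ℝ} (hr : 0 ≤ r) :
    sphericalConst d * ENNReal.ofReal (2 * r) ^ d
      = volume (closedBall (0 : EuclideanSpace ℝ (Fin d)) r) := by
  rw [Measure.addHaar_closedBall _ _ hr, finrank_euclideanSpace_fin, ENNReal.ofReal_pow hr,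
    ENNReal.ofReal_mul zero_le_two, ENNReal.ofReal_ofNat, mul_pow, sphericalConst, ← mul_assoc,
    ENNReal.div_mul_cancel (by positivity) (by finiteness), mul_comm]

lemma sphericalMeasure_apply {A : Set (EuclideanSpace ℝ (Fin n))} (hA : MeasurableSet A) :
    sphericalMeasure n d A = sphericalConst d * mkMetric' (sphericalPre n d) A := by
  rw [sphericalMeasure, Measure.smul_apply, smul_eq_mul, Measure.mkMetric', toMeasure_apply _ _ hA,
    sphericalConst]

lemma sphericalPre_closedBall (x : EuclideanSpace ℝ (Fin n)) (r : ℝ) :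
    sphericalPre n d (closedBall x r) = ediam (closedBall x r) ^ d :=
  if_pos ⟨x, r, rfl⟩

lemma pre_sphericalPre_le_of_subset_closedBall {A : Set (EuclideanSpace ℝ (Fin n))}
    {c : EuclideanSpace ℝ (Fin n)} {ρ δ : ℝ} (hA : A ⊆ closedBall c ρ) (hρ : 0 ≤ ρ)
    (hδ : 2 * ρ ≤ δ) :
    mkMetric'.pre (sphericalPre n d) (ENNReal.ofReal δ) A ≤ ENNReal.ofReal (2 * ρ) ^ d := by
  have hdiam : ediam (closedBall c ρ) ≤ ENNReal.ofReal (2 * ρ) :=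
    (ENNReal.le_ofReal_iff_toReal_le isBounded_closedBall.ediam_ne_top (by positivity)).2
      (diam_closedBall hρ)
  calc mkMetric'.pre (sphericalPre n d) (ENNReal.ofReal δ) A
      ≤ mkMetric'.pre (sphericalPre n d) (ENNReal.ofReal δ) (closedBall c ρ) := measure_mono hA
    _ ≤ sphericalPre n d (closedBall c ρ) :=
      mkMetric'.pre_le (hdiam.trans (ENNReal.ofReal_le_ofReal hδ))
    _ ≤ ENNReal.ofReal (2 * ρ) ^ d := by
      rw [sphericalPre_closedBall]
      gcongr

end SphericalMeasure

section Slicing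

open Filter Topology OuterMeasure

variable {n k : ℕ} {E A : Set (EuclideanSpace ℝ (Fin n))} {ε t : ℝ}

/-- The size-`2 * ε` approximation of the `𝒮^k`-measure of the slice of `A` at distance `t` from
`E`, discounted by the factor `(1 - ε / t) ^ (k / 2)`. The discount tends to `1` as `ε → 0` and
absorbs the error made in enclosing the slice of a ball in a ball, which is due to the curvature of
the level sets of the distance to `E`. -/
noncomputable def discountedSlice (k : ℕ) (E : Set (EuclideanSpace ℝ (Fin n))) (ε : ℝ)
    (A : Set (EuclideanSpace ℝ (Fin n))) (t : ℝ) : ℝ≥0∞ :=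
  sphericalConst k * (ENNReal.ofReal √(1 - ε / t) ^ k *
    mkMetric'.pre (sphericalPre n k) (ENNReal.ofReal (2 * ε)) {x ∈ A | infDist x E = t})

lemma discountedSlice_le_tsum {T : ℕ → Set (EuclideanSpace ℝ (Fin n))} (hT : A ⊆ ⋃ i, T i) :
    discountedSlice k E ε A t ≤ ∑' i, discountedSlice k E ε (T i) t := by
  have hslice : {x ∈ A | infDist x E = t} ⊆ ⋃ i, {x ∈ T i | infDist x E = t} :=
    fun x hx => mem_iUnion.2 ((mem_iUnion.1 (hT hx.1)).imp fun _ hi => ⟨hi, hx.2⟩)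
  simp only [discountedSlice, ENNReal.tsum_mul_left]
  gcongr
  exact (measure_mono hslice).trans (measure_iUnion_le _)

lemma discountedSlice_closedBall_le (hE : Convex ℝ E) (hne : E.Nonempty)
    (x : EuclideanSpace ℝ (Fin n)) {r : ℝ} (hε : 0 < ε) (hrε : 2 * r ≤ ε) (ht : 2 * ε ≤ t) :
    discountedSlice k E ε (closedBall x r) t
      ≤ ballSliceVolume (EuclideanSpace ℝ (Fin k)) r (t - infDist x E) := by
  rcases {y ∈ closedBall x r | infDist y E = t}.eq_empty_or_nonempty with hempty | ⟨y, hyx, hyt⟩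
  · simp only [discountedSlice, hempty, measure_empty, mul_zero, zero_le]
  have hheight : |t - infDist x E| ≤ r :=
    (hyt ▸ abs_infDist_sub_infDist_le_dist E y x).trans (mem_closedBall.1 hyx)
  have hr : 0 ≤ r := (abs_nonneg _).trans hheight
  have hsub : 0 < t - ε := by linarith
  have hx : t - ε ≤ infDist x E := by linarith [(abs_le.1 hheight).2]
  set K := t / (t - ε) with hK
  set q := r ^ 2 - (t - infDist x E) ^ 2
  have hq : 0 ≤ q := sub_nonneg.2 (sq_le_sq' (abs_le.1 hheight).1 (abs_le.1 hheight).2)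
  have hK1 : 1 ≤ K := (one_le_div hsub).2 (by linarith)
  have hK2 : K ≤ 2 := (div_le_iff₀ hsub).2 (by linarith)
  have htK : t ≤ K * infDist x E := by
    rw [hK, div_mul_eq_mul_div, le_div_iff₀ hsub]
    gcongr
    linarith
  obtain ⟨c, hc⟩ := exists_slice_closedBall_subset_closedBall hE hne r (hsub.trans_le hx) hK1 htK
  have hradius : √(K * q) ≤ 2 * r :=
    Real.sqrt_le_iff.2 ⟨by positivity, by nlinarith [sq_nonneg (t - infDist x E)]⟩
  have hdiscount : √(1 - ε / t) * (2 * √(K * q)) = 2 * √q := by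
    have ht0 : t ≠ 0 := by linarith
    have hK' : (1 - ε / t) * (K * q) = q := by rw [hK]; field_simp
    rw [mul_left_comm, ← Real.sqrt_mul' _ (by positivity), hK']
  calc discountedSlice k E ε (closedBall x r) t
      ≤ sphericalConst k * (ENNReal.ofReal √(1 - ε / t) ^ k
          * ENNReal.ofReal (2 * √(K * q)) ^ k) := by
        unfold discountedSlice
        gcongr
        exact pre_sphericalPre_le_of_subset_closedBall hc (Real.sqrt_nonneg _) (by linarith)
    _ = sphericalConst k * ENNReal.ofReal (2 * √q) ^ k := by
        rw [← mul_pow, ← ENNReal.ofReal_mul (Real.sqrt_nonneg _), hdiscount]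
    _ = ballSliceVolume (EuclideanSpace ℝ (Fin k)) r (t - infDist x E) := by
        rw [sphericalConst_mul_pow (Real.sqrt_nonneg q), ballSliceVolume_of_abs_le hheight]

lemma upperLIntegralLE_discountedSlice_sphericalPre (hE : Convex ℝ E) (hne : E.Nonempty)
    (hε : 0 < ε) (hA : A.Nonempty) (hdiam : ediam A ≤ ENNReal.ofReal ε) :
    UpperLIntegralLE (volume.restrict (Ici (2 * ε))) (discountedSlice k E ε A)
      (sphericalConst (k + 1) * sphericalPre n (k + 1) A) := by
  by_cases hball : ∃ x r, A = closedBall x r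
  · obtain ⟨x, r, rfl⟩ := hball
    obtain ⟨ρ, hρ, hrρ, hdiamρ⟩ := exists_closedBall_eq_ediam_eq x (nonempty_closedBall.1 hA)
    have hρε : 2 * ρ ≤ ε := (ENNReal.ofReal_le_ofReal_iff hε.le).1 (hdiamρ ▸ hdiam)
    refine ⟨fun t => ballSliceVolume (EuclideanSpace ℝ (Fin k)) ρ (t - infDist x E),
      (measurable_ballSliceVolume _ ρ).comp (measurable_id.sub_const _),
      ae_restrict_of_forall_mem measurableSet_Ici fun t ht =>
        hrρ ▸ discountedSlice_closedBall_le hE hne x hε hρε ht, ?_⟩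
    calc ∫⁻ t in Ici (2 * ε), ballSliceVolume (EuclideanSpace ℝ (Fin k)) ρ (t - infDist x E)
        ≤ ∫⁻ t, ballSliceVolume (EuclideanSpace ℝ (Fin k)) ρ (t - infDist x E) :=
          setLIntegral_le_lintegral _ _
      _ = ∫⁻ s, ballSliceVolume (EuclideanSpace ℝ (Fin k)) ρ s := lintegral_sub_right_eq_self _ _
      _ = volume (closedBall (0 : EuclideanSpace ℝ (Fin (k + 1))) ρ) :=
          lintegral_ballSliceVolume _ _ (by simp) hρ
      _ = sphericalConst (k + 1) * sphericalPre n (k + 1) (closedBall x r) := by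
          rw [sphericalPre_closedBall, hdiamρ, sphericalConst_mul_pow hρ]
  · rw [sphericalPre, if_neg hball, ENNReal.mul_top sphericalConst_ne_zero]
    exact .top

lemma upperLIntegralLE_discountedSlice_pre (hE : Convex ℝ E) (hne : E.Nonempty) (hε : 0 < ε)
    (A : Set (EuclideanSpace ℝ (Fin n))) :
    UpperLIntegralLE (volume.restrict (Ici (2 * ε))) (discountedSlice k E ε A)
      (sphericalConst (k + 1) *
        mkMetric'.pre (sphericalPre n (k + 1)) (ENNReal.ofReal ε) A) := by
  simp only [mkMetric'.pre, boundedBy_apply, extend,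
    ENNReal.mul_iInf_of_ne sphericalConst_ne_zero sphericalConst_ne_top, ← ENNReal.tsum_mul_left]
  refine .iInf fun T => .iInf fun hT => ?_
  refine UpperLIntegralLE.mono (.tsum fun i => ?_)
    (ae_of_all _ fun t => discountedSlice_le_tsum hT) le_rfl
  rcases (T i).eq_empty_or_nonempty with hempty | hnonempty
  · have hzero : discountedSlice k E ε (T i) = 0 := by
      ext t
      simp [discountedSlice, hempty]
    exact ⟨0, measurable_zero, ae_of_all _ hzero.le, by simp⟩
  · rw [iSup_pos hnonempty, ENNReal.mul_iInf_of_ne sphericalConst_ne_zero sphericalConst_ne_top]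
    exact .iInf (upperLIntegralLE_discountedSlice_sphericalPre hE hne hε hnonempty)

lemma tendsto_discountedSlice (k : ℕ) (E A : Set (EuclideanSpace ℝ (Fin n))) (t : ℝ) :
    Tendsto (fun ε => discountedSlice k E ε A t) (𝓝[>] 0)
      (𝓝 (sphericalConst k * mkMetric' (sphericalPre n k) {x ∈ A | infDist x E = t})) := by
  have hdiscount : Tendsto (fun ε : ℝ => ENNReal.ofReal √(1 - ε / t) ^ k) (𝓝[>] 0) (𝓝 1) := by
    have : Continuous fun ε : ℝ => ENNReal.ofReal √(1 - ε / t) ^ k :=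
      (ENNReal.continuous_pow k).comp (ENNReal.continuous_ofReal.comp (by fun_prop))
    simpa using (this.tendsto 0).mono_left nhdsWithin_le_nhds
  have hmesh : Tendsto (fun ε : ℝ => ENNReal.ofReal (2 * ε)) (𝓝[>] 0) (𝓝[>] 0) := by
    refine tendsto_nhdsWithin_iff.2 ⟨?_, ?_⟩
    · have : Continuous fun ε : ℝ => ENNReal.ofReal (2 * ε) :=
        ENNReal.continuous_ofReal.comp (by fun_prop)
      simpa using (this.tendsto 0).mono_left nhdsWithin_le_nhds
    · filter_upwards [self_mem_nhdsWithin] with ε hε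
      exact ENNReal.ofReal_pos.2 (mul_pos two_pos hε)
  have hlim := ENNReal.Tendsto.mul hdiscount (.inl one_ne_zero)
    ((mkMetric'.tendsto_pre (sphericalPre n k) {x ∈ A | infDist x E = t}).comp hmesh)
    (.inr ENNReal.one_ne_top)
  rw [one_mul] at hlim
  exact ENNReal.Tendsto.const_mul hlim (.inr sphericalConst_ne_top)

lemma upperLIntegralLE_mkMetric'_slice (hE : Convex ℝ E) (hne : E.Nonempty)
    (A : Set (EuclideanSpace ℝ (Fin n))) :
    UpperLIntegralLE (volume.restrict (Ioi 0))
      (fun t => sphericalConst k * mkMetric' (sphericalPre n k) {x ∈ A | infDist x E = t})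
      (sphericalConst (k + 1) * mkMetric' (sphericalPre n (k + 1)) A) := by
  obtain ⟨ε, -, hε, hlim⟩ := exists_seq_strictAnti_tendsto (0 : ℝ)
  have hlim' : Tendsto ε atTop (𝓝[>] 0) := tendsto_nhdsWithin_iff.2 ⟨hlim, .of_forall hε⟩
  refine .of_tendsto (g := fun j => (Ici (2 * ε j)).indicator (discountedSlice k E (ε j) A))
    (fun j => .indicator measurableSet_Ici ?_) ?_ tendsto_const_nhds
  · rw [Measure.restrict_restrict_of_subset (Ici_subset_Ioi.2 (mul_pos two_pos (hε j)))]
    refine (upperLIntegralLE_discountedSlice_pre hE hne (hε j) A).mono .rfl ?_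
    gcongr
    exact le_iSup₂ (f := fun r (_ : r > 0) => mkMetric'.pre (sphericalPre n (k + 1)) r)
      _ (ENNReal.ofReal_pos.2 (hε j))
  · refine ae_restrict_of_forall_mem measurableSet_Ioi fun t ht => ?_
    refine ((tendsto_discountedSlice k E A t).comp hlim').congr' ?_
    filter_upwards [hlim.eventually_lt_const (half_pos ht)] with j hj
    have hmem : t ∈ Ici (2 * ε j) := mem_Ici.2 (by linarith)
    exact (indicator_of_mem hmem _).symm

lemma upperLIntegralLE_sphericalMeasure_slice (hE : Convex ℝ E) (hne : E.Nonempty)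
    (A : Set (EuclideanSpace ℝ (Fin n))) :
    UpperLIntegralLE (volume.restrict (Ioi 0))
      (fun t => sphericalMeasure n k {x ∈ A | infDist x E = t})
      (sphericalMeasure n (k + 1) A) := by
  set A' := toMeasurable (sphericalMeasure n (k + 1)) A
  have hA' : MeasurableSet A' := measurableSet_toMeasurable _ _
  rw [← measure_toMeasurable, sphericalMeasure_apply hA']
  refine (upperLIntegralLE_mkMetric'_slice hE hne A').mono (ae_of_all _ fun t => ?_) le_rfl
  have hslice : MeasurableSet {x ∈ A' | infDist x E = t} :=
    hA'.inter (measurable_infDist (measurableSet_singleton t))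
  calc sphericalMeasure n k {x ∈ A | infDist x E = t}
      ≤ sphericalMeasure n k {x ∈ A' | infDist x E = t} :=
        measure_mono fun x hx => ⟨subset_toMeasurable _ _ hx.1, hx.2⟩
    _ = sphericalConst k * mkMetric' (sphericalPre n k) {x ∈ A' | infDist x E = t} :=
        sphericalMeasure_apply hslice

theorem spherical_slicing_inequality_general (hE : Convex ℝ E) (hne : E.Nonempty)
    (X : Set (EuclideanSpace ℝ (Fin n))) {f : EuclideanSpace ℝ (Fin n) → ℝ≥0∞}
    (hf : AEMeasurable f ((sphericalMeasure n (k + 1)).restrict X)) :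
    ∫⁻ t in Ioi (0 : ℝ), ∫⁻ q in {x ∈ X | infDist x E = t}, f q ∂(sphericalMeasure n k)
      ≤ ∫⁻ q in X, f q ∂(sphericalMeasure n (k + 1)) := by
  refine (UpperLIntegralLE.lintegral (fun s hs => ?_) hf).lintegral_le
  simpa only [Measure.restrict_apply hs, inter_def, mem_ofPred_eq, and_assoc]
    using upperLIntegralLE_sphericalMeasure_slice hE hne (s ∩ X)

end Slicing

/-- slicing (sharp Eilenberg) inequality for spherical measure.
If `X ⊆ ℝⁿ` is `𝒮^m`-measurable with `𝒮^m X < ∞` and `f` is measurable,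
nonnegative and bounded, and `X_t` is the set of points of `X` at distance `t`
from an `M`-dimensional affine subspace `E` (`0 ≤ M ≤ n−1`), then
`∫₀^∞ ∫_{X_t} f d𝒮^{m−1} dt ≤ ∫_X f d𝒮^m`. -/
theorem spherical_slicing_inequality (n m M : ℕ) (hm : 1 ≤ m) (hM : M ≤ n - 1)
    (X : Set (EuclideanSpace ℝ (Fin n)))
    (hX : MeasurableSet X) (hXfin : sphericalMeasure n m X < ⊤)
    (f : EuclideanSpace ℝ (Fin n) → ℝ) (hf : Measurable f)
    (hf0 : ∀ x, 0 ≤ f x) (B : ℝ) (hfB : ∀ x, f x ≤ B)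
    (E : AffineSubspace ℝ (EuclideanSpace ℝ (Fin n))) (hE : (E : Set (EuclideanSpace ℝ (Fin n))).Nonempty)
    (hEdim : Module.finrank ℝ E.direction = M) :
    ∫⁻ t in Set.Ioi (0 : ℝ),
        ∫⁻ q in {x ∈ X | Metric.infDist x (E : Set (EuclideanSpace ℝ (Fin n))) = t}, ENNReal.ofReal (f q)
          ∂(sphericalMeasure n (m - 1)) ∂volume
      ≤ ∫⁻ q in X, ENNReal.ofReal (f q) ∂(sphericalMeasure n m) := by
  obtain ⟨k, rfl⟩ := Nat.exists_eq_add_of_le' hm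
  exact spherical_slicing_inequality_general E.convex hE X hf.ennreal_ofReal.aemeasurable
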